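/- arXiv:1009.4092 — 3 statements merged into one kernel-verified Lean document; each statement's English description precedes it below -/
import Mathlib

section
/- Let n > 0, α ≥ 0, and let u be a strictly positive classical solution of the thin-film equation ∂_t u + ∂_θ( uⁿ ( ∂_θ³ u + α² ∂_θ u − sin θ ) ) = 0 on (0, ∞) × ℝ, 2π-periodic in θ. Then for every t > 0, the energy E(u(t, ·)) = (1/2)∫_{-π}^{π} ((∂_θ u)² − α² u²)(t,θ) dθ − ∫_{-π}^{π} u(t,θ) cos θ dθ is differentiable in t and satisfies the dissipation identity d/dt E(u(t, ·)) = − ∫_{-π}^{π} u(t,θ)ⁿ ( ∂_θ³ u + α² ∂_θ u − sin θ )²(t,θ) dθ ≤ 0. -/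
open MeasureTheory Real Set Filter

/-- The thin-film energy `E(v) = (1/2)∫_{-π}^{π} (v'² − α²v²) dθ − ∫_{-π}^{π} v cos θ dθ`. -/
noncomputable def energy (α : ℝ) (u : ℝ → ℝ) : ℝ :=
  (1/2) * (∫ θ in (-π)..π, ((deriv u θ)^2 - α^2 * (u θ)^2)) -
    ∫ θ in (-π)..π, u θ * Real.cos θ

/-- A strictly positive classical solution of the thin-film equation
`∂ₜu + ∂_θ(uⁿ(∂_θ³u + α²∂_θu − sin θ)) = 0` on `(0,∞) × ℝ`: a smooth function on
`[0,∞) × ℝ`, `2π`-periodic and strictly positive, satisfying the equation for `t > 0`. -/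
def IsThinFilmSolution (n α : ℝ) (u : ℝ → ℝ → ℝ) : Prop :=
  ContDiffOn ℝ (⊤ : ℕ∞) (fun p : ℝ × ℝ => u p.1 p.2) (Ici (0:ℝ) ×ˢ (univ : Set ℝ)) ∧
  (∀ t θ : ℝ, 0 ≤ t → 0 < u t θ) ∧
  (∀ t : ℝ, Function.Periodic (u t) (2*π)) ∧
  (∀ t θ : ℝ, 0 < t →
    deriv (fun s => u s θ) t +
      deriv (fun x => u t x ^ n *
        (deriv (deriv (deriv (u t))) x + α^2 * deriv (u t) x - Real.sin x)) θ = 0)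

/-!
Writing `p = u'' + α²u + cos θ`, the equation reads `∂ₜu = -(uⁿ p')'`. Periodicity makes `-p` the
`L²`-gradient of the energy, so `dE/dt = -∫ p ∂ₜu = ∫ p (uⁿ p')'`, and a second integration by parts
over the period gives `-∫ uⁿ p'²`.
-/

open Function
open scoped ContDiff Topology Interval

section PartialDerivatives

variable {𝕜 E : Type*} [NontriviallyNormedField 𝕜] [NormedAddCommGroup E] [NormedSpace 𝕜 E]
  {f : 𝕜 → 𝕜 → E} {t x : 𝕜} {m n : ℕ∞ω}

theorem hasDerivAt_slice_fst (hf : DifferentiableAt 𝕜 (uncurry f) (t, x)) :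
    HasDerivAt (fun s => f s x) (fderiv 𝕜 (uncurry f) (t, x) (1, 0)) t :=
  hf.hasFDerivAt.comp_hasDerivAt (f := fun s => (s, x)) t
    ((hasDerivAt_id t).prodMk (hasDerivAt_const t x))

theorem hasDerivAt_slice_snd (hf : DifferentiableAt 𝕜 (uncurry f) (t, x)) :
    HasDerivAt (f t) (fderiv 𝕜 (uncurry f) (t, x) (0, 1)) x :=
  hf.hasFDerivAt.comp_hasDerivAt (f := fun y => (t, y)) x
    ((hasDerivAt_const x t).prodMk (hasDerivAt_id x))

theorem differentiableAt_slice_fst (hf : DifferentiableAt 𝕜 (uncurry f) (t, x)) :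
    DifferentiableAt 𝕜 (fun s => f s x) t :=
  (hasDerivAt_slice_fst hf).differentiableAt

theorem contDiffAt_slice_snd (hf : ContDiffAt 𝕜 n (uncurry f) (t, x)) : ContDiffAt 𝕜 n (f t) x :=
  hf.comp x (contDiff_prodMk_right t).contDiffAt

theorem contDiff_slice_snd (hf : ∀ x, ContDiffAt 𝕜 n (uncurry f) (t, x)) : ContDiff 𝕜 n (f t) :=
  contDiff_iff_contDiffAt.2 fun x => contDiffAt_slice_snd (hf x)

theorem eventually_differentiableAt_of_contDiffAt {G : Type*} [NormedAddCommGroup G]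
    [NormedSpace 𝕜 G] {F : G → E} {p : G} (hF : ContDiffAt 𝕜 1 F p) :
    ∀ᶠ q in 𝓝 p, DifferentiableAt 𝕜 F q :=
  (hF.eventually (by simp)).mono fun _ hq => hq.differentiableAt one_ne_zero

theorem partialDeriv_fst_eventuallyEq (hf : ContDiffAt 𝕜 1 (uncurry f) (t, x)) :
    uncurry (fun s y => deriv (fun r => f r y) s) =ᶠ[𝓝 (t, x)]
      fun p => fderiv 𝕜 (uncurry f) p (1, 0) :=
  (eventually_differentiableAt_of_contDiffAt hf).mono fun _ hp => (hasDerivAt_slice_fst hp).deriv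

theorem partialDeriv_snd_eventuallyEq (hf : ContDiffAt 𝕜 1 (uncurry f) (t, x)) :
    uncurry (fun s => deriv (f s)) =ᶠ[𝓝 (t, x)] fun p => fderiv 𝕜 (uncurry f) p (0, 1) :=
  (eventually_differentiableAt_of_contDiffAt hf).mono fun _ hp => (hasDerivAt_slice_snd hp).deriv

theorem contDiffAt_partialDeriv_fst (hf : ContDiffAt 𝕜 n (uncurry f) (t, x)) (hmn : m + 1 ≤ n) :
    ContDiffAt 𝕜 m (uncurry fun s y => deriv (fun r => f r y) s) (t, x) :=
  ((hf.fderiv_right hmn).clm_apply contDiffAt_const).congr_of_eventuallyEq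
    (partialDeriv_fst_eventuallyEq (hf.of_le (le_add_self.trans hmn)))

theorem contDiffAt_partialDeriv_snd (hf : ContDiffAt 𝕜 n (uncurry f) (t, x)) (hmn : m + 1 ≤ n) :
    ContDiffAt 𝕜 m (uncurry fun s => deriv (f s)) (t, x) :=
  ((hf.fderiv_right hmn).clm_apply contDiffAt_const).congr_of_eventuallyEq
    (partialDeriv_snd_eventuallyEq (hf.of_le (le_add_self.trans hmn)))

theorem hasDerivAt_partialDeriv_snd (hf : ContDiffAt 𝕜 n (uncurry f) (t, x))
    (hn : minSmoothness 𝕜 2 ≤ n) :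
    HasDerivAt (fun s => deriv (f s) x) (deriv (fun y => deriv (fun s => f s y) t) x) t := by
  have hf₂ : ContDiffAt 𝕜 2 (uncurry f) (t, x) := hf.of_le (le_minSmoothness.trans hn)
  have hf₁ : ContDiffAt 𝕜 1 (uncurry f) (t, x) := hf₂.of_le one_le_two
  have hdd : DifferentiableAt 𝕜 (uncurry (curry (fderiv 𝕜 (uncurry f)))) (t, x) :=
    (hf₂.fderiv_right one_add_one_eq_two.le).differentiableAt one_ne_zero
  have h₁ : (fun s => deriv (f s) x) =ᶠ[𝓝 t] fun s => fderiv 𝕜 (uncurry f) (s, x) (0, 1) :=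
    (partialDeriv_snd_eventuallyEq hf₁).comp_tendsto (Continuous.prodMk_left x).continuousAt
  have h₂ : (fun y => deriv (fun s => f s y) t) =ᶠ[𝓝 x]
      fun y => fderiv 𝕜 (uncurry f) (t, y) (1, 0) :=
    (partialDeriv_fst_eventuallyEq hf₁).comp_tendsto (Continuous.prodMk_right t).continuousAt
  have h₁₂ : HasDerivAt (fun s => fderiv 𝕜 (uncurry f) (s, x) (0, 1))
      (fderiv 𝕜 (fderiv 𝕜 (uncurry f)) (t, x) (1, 0) (0, 1)) t := by
    simpa using (hasDerivAt_slice_fst hdd).clm_apply (hasDerivAt_const t ((0 : 𝕜), (1 : 𝕜)))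
  have h₂₁ : HasDerivAt (fun y => fderiv 𝕜 (uncurry f) (t, y) (1, 0))
      (fderiv 𝕜 (fderiv 𝕜 (uncurry f)) (t, x) (0, 1) (1, 0)) x := by
    simpa using (hasDerivAt_slice_snd hdd).clm_apply (hasDerivAt_const x ((1 : 𝕜), (0 : 𝕜)))
  rw [h₂.deriv_eq, h₂₁.deriv, ← hf.isSymmSndFDerivAt hn]
  exact h₁₂.congr_of_eventuallyEq h₁

end PartialDerivatives

section IntervalIntegral

variable {E : Type*} [NormedAddCommGroup E] [NormedSpace ℝ E] {a b t : ℝ}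

theorem hasDerivAt_intervalIntegral_of_contDiffAt {f : ℝ → ℝ → E} {f' : ℝ → E}
    (hf : ∀ x ∈ [[a, b]], ContDiffAt ℝ 1 (uncurry f) (t, x))
    (hf' : ∀ x ∈ [[a, b]], HasDerivAt (fun s => f s x) (f' x) t) :
    HasDerivAt (fun s => ∫ x in a..b, f s x) (∫ x in a..b, f' x) t := by
  set D : ℝ → ℝ → E := fun s x => deriv (fun r => f r x) s
  have hD : ∀ x ∈ [[a, b]], ContinuousAt (uncurry D) (t, x) := fun x hx =>
    (contDiffAt_partialDeriv_fst (m := 0) (hf x hx) (zero_add 1).le).continuousAt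
  have hDt : ContinuousOn (D t) [[a, b]] := fun x hx =>
    ((hD x hx).comp (Continuous.prodMk_right t).continuousAt).continuousWithinAt
  obtain ⟨C, hC⟩ := isCompact_uIcc.exists_bound_of_continuousOn hDt
  have hsmooth : ∀ᶠ s in 𝓝 t, ∀ x ∈ [[a, b]], ContDiffAt ℝ 1 (uncurry f) (s, x) :=
    isCompact_uIcc.eventually_forall_of_forall_eventually fun x hx =>
      (hf x hx).eventually (by simp)
  have hbound : ∀ᶠ s in 𝓝 t, ∀ x ∈ [[a, b]], ‖D s x‖ < C + 1 :=
    isCompact_uIcc.eventually_forall_of_forall_eventually fun x hx =>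
      (hD x hx).norm.eventually_lt_const ((hC x hx).trans_lt (lt_add_one C))
  have hcont : ∀ s, (∀ x ∈ [[a, b]], ContDiffAt ℝ 1 (uncurry f) (s, x)) →
      ContinuousOn (f s) [[a, b]] := fun s hs x hx =>
    (contDiffAt_slice_snd (hs x hx)).continuousAt.continuousWithinAt
  rw [intervalIntegral.integral_congr fun x hx => (hf' x hx).deriv.symm]
  refine (intervalIntegral.hasDerivAt_integral_of_dominated_loc_of_deriv_le (F' := D)
    (bound := fun _ => C + 1) (hsmooth.and hbound) ?_ (hcont t hf).intervalIntegrable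
    ((hDt.mono uIoc_subset_uIcc).aestronglyMeasurable measurableSet_uIoc) ?_
    intervalIntegrable_const ?_).2
  · exact hsmooth.mono fun s hs =>
      ((hcont s hs).mono uIoc_subset_uIcc).aestronglyMeasurable measurableSet_uIoc
  · exact .of_forall fun x hx s hs => (hs.2 x (uIoc_subset_uIcc hx)).le
  · exact .of_forall fun x hx s hs => (differentiableAt_slice_fst ((hs.1 x
      (uIoc_subset_uIcc hx)).differentiableAt one_ne_zero)).hasDerivAt

theorem integral_mul_deriv_eq_neg_deriv_mul_of_periodic {A : Type*} [NormedRing A]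
    [NormedAlgebra ℝ A] [CompleteSpace A] {f f' g g' : ℝ → A}
    (hf : ∀ x, HasDerivAt f (f' x) x) (hg : ∀ x, HasDerivAt g (g' x) x)
    (hf' : IntervalIntegrable f' volume a b) (hg' : IntervalIntegrable g' volume a b)
    (hfper : Periodic f (b - a)) (hgper : Periodic g (b - a)) :
    ∫ x in a..b, f x * g' x = -∫ x in a..b, f' x * g x := by
  have hfab : f b = f a := by simpa using hfper a
  have hgab : g b = g a := by simpa using hgper a
  rw [intervalIntegral.integral_mul_deriv_eq_deriv_mul (fun x _ => hf x) (fun x _ => hg x) hf' hg',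
    hfab, hgab, sub_self, zero_sub]

end IntervalIntegral

section Periodic

variable {𝕜 E : Type*} [NontriviallyNormedField 𝕜] [NormedAddCommGroup E] [NormedSpace 𝕜 E]

theorem periodic_deriv {f : 𝕜 → E} {c : 𝕜} (hf : Periodic f c) : Periodic (deriv f) c := fun x => by
  rw [← deriv_comp_add_const, funext hf]

theorem periodic_partialDeriv_fst {X : Type*} [Add X] {f : 𝕜 → X → E} {t : 𝕜} {c : X}
    (hf : ∀ᶠ s in 𝓝 t, Periodic (f s) c) : Periodic (fun x => deriv (fun s => f s x) t) c :=
  fun x => EventuallyEq.deriv_eq (hf.mono fun _ hs => hs x)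

end Periodic

section ThinFilm

variable {n α t : ℝ} {w : ℝ → ℝ} {u : ℝ → ℝ → ℝ}

/-- The pressure `w'' + α²w + cos θ` of a film profile `w`. For periodic profiles it is minus the
`L²`-gradient of `energy α`, and its derivative drives the flux in the thin-film equation. -/
noncomputable def filmPressure (α : ℝ) (w : ℝ → ℝ) (θ : ℝ) : ℝ :=
  deriv (deriv w) θ + α ^ 2 * w θ + Real.cos θ

theorem periodic_filmPressure (hw : Periodic w (2 * π)) : Periodic (filmPressure α w) (2 * π) :=
  fun θ => by
    simp only [filmPressure, periodic_deriv (periodic_deriv hw) θ, hw θ, Real.cos_periodic θ]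

theorem contDiff_filmPressure {k : ℕ∞ω} (hw : ContDiff ℝ (k + 2) w) :
    ContDiff ℝ k (filmPressure α w) := by
  have hw'' : ContDiff ℝ (k + 1 + 1) w := by rwa [add_assoc, one_add_one_eq_two]
  exact (hw''.deriv'.deriv'.add (contDiff_const.mul (hw.of_le le_self_add))).add
    Real.contDiff_cos

theorem deriv_filmPressure (hw : ContDiff ℝ 3 w) :
    deriv (filmPressure α w) =
      fun θ => deriv (deriv (deriv w)) θ + α ^ 2 * deriv w θ - Real.sin θ := by
  funext θ
  have hw₁ : HasDerivAt w (deriv w θ) θ := (hw.differentiable three_ne_zero θ).hasDerivAt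
  have hw'' : ContDiff ℝ 1 (deriv (deriv w)) := ContDiff.deriv' (ContDiff.deriv' hw)
  have hw₃ : HasDerivAt (deriv (deriv w)) (deriv (deriv (deriv w)) θ) θ :=
    (hw''.differentiable one_ne_zero θ).hasDerivAt
  exact ((hw₃.add (hw₁.const_mul _)).add (Real.hasDerivAt_cos θ)).deriv

theorem hasDerivAt_energy (hu : ∀ θ, ContDiffAt ℝ 2 (uncurry u) (t, θ)) :
    HasDerivAt (fun s => energy α (u s))
      (∫ θ in (-π)..π, (deriv (u t) θ * deriv (fun x => deriv (fun s => u s x) t) θ -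
        (α ^ 2 * u t θ + Real.cos θ) * deriv (fun s => u s θ) t)) t := by
  set v : ℝ → ℝ := fun θ => deriv (fun s => u s θ) t
  have hu₁ : ∀ θ, ContDiffAt ℝ 1 (uncurry u) (t, θ) := fun θ => (hu θ).of_le one_le_two
  have hux : ∀ θ, ContDiffAt ℝ 1 (uncurry fun s => deriv (u s)) (t, θ) := fun θ =>
    contDiffAt_partialDeriv_snd (hu θ) one_add_one_eq_two.le
  have hv : ContDiff ℝ 1 v := contDiff_slice_snd fun θ =>
    contDiffAt_partialDeriv_fst (hu θ) one_add_one_eq_two.le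
  have hw : ContDiff ℝ 2 (u t) := contDiff_slice_snd hu
  have hut : ∀ θ, HasDerivAt (fun s => u s θ) (v θ) t := fun θ =>
    (differentiableAt_slice_fst ((hu₁ θ).differentiableAt one_ne_zero)).hasDerivAt
  have huxt : ∀ θ, HasDerivAt (fun s => deriv (u s) θ) (deriv v θ) t := fun θ =>
    hasDerivAt_partialDeriv_snd (hu θ) (by simp)
  have hquad : HasDerivAt (fun s => ∫ θ in (-π)..π, (deriv (u s) θ ^ 2 - α ^ 2 * u s θ ^ 2))
      (∫ θ in (-π)..π, 2 * (deriv (u t) θ * deriv v θ - α ^ 2 * u t θ * v θ)) t :=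
    hasDerivAt_intervalIntegral_of_contDiffAt
      (fun θ _ => ((hux θ).pow 2).sub (contDiffAt_const.mul ((hu₁ θ).pow 2)))
      fun θ _ => (((huxt θ).pow 2).sub (((hut θ).pow 2).const_mul _)).congr_deriv (by ring)
  have hlin : HasDerivAt (fun s => ∫ θ in (-π)..π, u s θ * Real.cos θ)
      (∫ θ in (-π)..π, v θ * Real.cos θ) t :=
    hasDerivAt_intervalIntegral_of_contDiffAt
      (fun θ _ => (hu₁ θ).mul (Real.contDiff_cos.comp contDiff_snd).contDiffAt)
      fun θ _ => (hut θ).mul_const _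
  refine ((hquad.const_mul (1 / 2)).sub hlin).congr_deriv ?_
  have hcont : Continuous fun θ => deriv (u t) θ * deriv v θ - α ^ 2 * u t θ * v θ :=
    ((hw.continuous_deriv one_le_two).mul (hv.continuous_deriv le_rfl)).sub
      ((continuous_const.mul hw.continuous).mul hv.continuous)
  have hcos : Continuous fun θ => v θ * Real.cos θ := hv.continuous.mul Real.continuous_cos
  rw [intervalIntegral.integral_const_mul, one_div, inv_mul_cancel_left₀ two_ne_zero,
    ← intervalIntegral.integral_sub (hcont.intervalIntegrable _ _) (hcos.intervalIntegrable _ _)]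
  exact intervalIntegral.integral_congr fun θ _ => by ring

theorem integral_energy_variation_eq_neg_integral_filmPressure_mul {v : ℝ → ℝ}
    (hw : ContDiff ℝ 2 w) (hv : ContDiff ℝ 1 v)
    (hwper : Periodic w (2 * π)) (hvper : Periodic v (2 * π)) :
    ∫ θ in (-π)..π, (deriv w θ * deriv v θ - (α ^ 2 * w θ + Real.cos θ) * v θ) =
      -∫ θ in (-π)..π, filmPressure α w θ * v θ := by
  have hper : π - -π = 2 * π := by ring
  have hw' : ContDiff ℝ 1 (deriv w) := hw.deriv'
  have hw'' : Continuous (deriv (deriv w)) := hw'.continuous_deriv le_rfl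
  have hv' : Continuous (deriv v) := hv.continuous_deriv le_rfl
  have hgrad : Continuous fun θ => deriv w θ * deriv v θ := hw'.continuous.mul hv'
  have hcurv : Continuous fun θ => deriv (deriv w) θ * v θ := hw''.mul hv.continuous
  have hlow : Continuous fun θ => (α ^ 2 * w θ + Real.cos θ) * v θ :=
    ((continuous_const.mul hw.continuous).add Real.continuous_cos).mul hv.continuous
  have hparts : ∫ θ in (-π)..π, deriv w θ * deriv v θ = -∫ θ in (-π)..π, deriv (deriv w) θ * v θ :=
    integral_mul_deriv_eq_neg_deriv_mul_of_periodic
      (fun θ => (hw'.differentiable one_ne_zero θ).hasDerivAt)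
      (fun θ => (hv.differentiable one_ne_zero θ).hasDerivAt)
      (hw''.intervalIntegrable _ _) (hv'.intervalIntegrable _ _)
      (hper ▸ periodic_deriv hwper) (hper ▸ hvper)
  rw [intervalIntegral.integral_sub (hgrad.intervalIntegrable _ _)
    (hlow.intervalIntegrable _ _), hparts, ← neg_add', ← intervalIntegral.integral_add
    (hcurv.intervalIntegrable _ _) (hlow.intervalIntegrable _ _)]
  simp only [filmPressure, add_mul, add_assoc]

theorem hasDerivAt_energy_of_periodic (hu : ∀ θ, ContDiffAt ℝ 2 (uncurry u) (t, θ))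
    (hper : ∀ᶠ s in 𝓝 t, Periodic (u s) (2 * π)) :
    HasDerivAt (fun s => energy α (u s))
      (-∫ θ in (-π)..π, filmPressure α (u t) θ * deriv (fun s => u s θ) t) t := by
  rw [← integral_energy_variation_eq_neg_integral_filmPressure_mul
    (contDiff_slice_snd hu)
    (contDiff_slice_snd fun θ => contDiffAt_partialDeriv_fst (hu θ) one_add_one_eq_two.le)
    hper.self_of_nhds (periodic_partialDeriv_fst hper)]
  exact hasDerivAt_energy hu

theorem integral_filmPressure_mul_eq_dissipation {m v : ℝ → ℝ} (hw : ContDiff ℝ 4 w)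
    (hv : Continuous v) (hm : Differentiable ℝ m) (hwper : Periodic w (2 * π))
    (hmper : Periodic m (2 * π))
    (heq : ∀ θ, v θ + deriv (fun x => m x * deriv (filmPressure α w) x) θ = 0) :
    ∫ θ in (-π)..π, filmPressure α w θ * v θ =
      ∫ θ in (-π)..π, m θ * deriv (filmPressure α w) θ ^ 2 := by
  set p := filmPressure α w
  have hper : π - -π = 2 * π := by ring
  have hp : ContDiff ℝ 2 p := contDiff_filmPressure hw
  have hflux : ∀ θ, HasDerivAt (fun x => m x * deriv p x) (-v θ) θ := fun θ => by
    rw [← eq_neg_of_add_eq_zero_right (heq θ)]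
    exact ((hm θ).mul (hp.deriv'.differentiable one_ne_zero θ)).hasDerivAt
  have hparts := integral_mul_deriv_eq_neg_deriv_mul_of_periodic (a := -π) (b := π)
    (fun θ => (hp.differentiable two_ne_zero θ).hasDerivAt) hflux
    ((hp.continuous_deriv one_le_two).intervalIntegrable _ _) (hv.neg.intervalIntegrable _ _)
    (hper ▸ periodic_filmPressure hwper)
    (hper ▸ hmper.mul (periodic_deriv (periodic_filmPressure hwper)))
  simp only [mul_neg, intervalIntegral.integral_neg, neg_inj] at hparts
  rw [hparts]
  exact intervalIntegral.integral_congr fun θ _ => by ring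

/-- The function `m` is the mobility at the fixed time `t`; the thin-film equation has
`m = u(t, ·)ⁿ`. -/
theorem energy_dissipation_general {m : ℝ → ℝ}
    (hu : ∀ θ, ContDiffAt ℝ 4 (uncurry u) (t, θ)) (hper : ∀ᶠ s in 𝓝 t, Periodic (u s) (2 * π))
    (hm : Differentiable ℝ m) (hmper : Periodic m (2 * π)) (hm_nonneg : ∀ θ, 0 ≤ m θ)
    (heq : ∀ θ, deriv (fun s => u s θ) t + deriv (fun x => m x *
      (deriv (deriv (deriv (u t))) x + α ^ 2 * deriv (u t) x - Real.sin x)) θ = 0) :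
    HasDerivAt (fun s => energy α (u s))
      (-∫ θ in (-π)..π, m θ *
        (deriv (deriv (deriv (u t))) θ + α ^ 2 * deriv (u t) θ - Real.sin θ) ^ 2) t ∧
    (-∫ θ in (-π)..π, m θ *
        (deriv (deriv (deriv (u t))) θ + α ^ 2 * deriv (u t) θ - Real.sin θ) ^ 2) ≤ 0 := by
  have hw : ContDiff ℝ 4 (u t) := contDiff_slice_snd hu
  have hv : ContDiff ℝ 3 fun θ => deriv (fun s => u s θ) t :=
    contDiff_slice_snd fun θ => contDiffAt_partialDeriv_fst (hu θ) three_add_one_eq_four.le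
  have hp := deriv_filmPressure (α := α) (hw.of_le (by norm_num))
  have hdiss := integral_filmPressure_mul_eq_dissipation (α := α) hw hv.continuous hm
    hper.self_of_nhds hmper (by simpa only [hp] using heq)
  simp only [hp] at hdiss
  exact ⟨hdiss ▸ hasDerivAt_energy_of_periodic (fun θ => (hu θ).of_le (by norm_num)) hper,
    neg_nonpos.2 (intervalIntegral.integral_nonneg (by linarith [Real.pi_pos])
      fun θ _ => mul_nonneg (hm_nonneg θ) (sq_nonneg _))⟩

theorem IsThinFilmSolution.contDiffAt (hu : IsThinFilmSolution n α u) (ht : 0 < t) (θ : ℝ) :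
    ContDiffAt ℝ ∞ (uncurry u) (t, θ) :=
  hu.1.contDiffAt (prod_mem_nhds (Ici_mem_nhds ht) univ_mem)

theorem IsThinFilmSolution.differentiable_rpow (hu : IsThinFilmSolution n α u) (ht : 0 < t) :
    Differentiable ℝ fun θ => u t θ ^ n := fun θ =>
  ((contDiffAt_slice_snd (hu.contDiffAt ht θ)).differentiableAt (by simp)).rpow_const
    (.inl (hu.2.1 t θ ht.le).ne')

end ThinFilm

/-- Energy dissipation identity: along a strictly positive classical
solution of the thin-film equation, for each `t > 0` the energy is differentiable in time
with `d/dt E(u(t,·)) = −∫ uⁿ (∂_θ³u + α²∂_θu − sin θ)² dθ ≤ 0`. -/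
theorem energy_dissipation (n α : ℝ) (hn : 0 < n) (hα : 0 ≤ α)
    (u : ℝ → ℝ → ℝ) (hu : IsThinFilmSolution n α u) (t : ℝ) (ht : 0 < t) :
    HasDerivAt (fun s => energy α (u s))
      (-∫ θ in (-π)..π, u t θ ^ n *
        (deriv (deriv (deriv (u t))) θ + α^2 * deriv (u t) θ - Real.sin θ)^2) t ∧
    (-∫ θ in (-π)..π, u t θ ^ n *
        (deriv (deriv (deriv (u t))) θ + α^2 * deriv (u t) θ - Real.sin θ)^2) ≤ 0 := by
  have ⟨_, hpos, hper, heq⟩ := hu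
  exact energy_dissipation_general
    (fun θ => (hu.contDiffAt ht θ).of_le (WithTop.coe_le_coe.2 le_top)) (.of_forall hper)
    (hu.differentiable_rpow ht) ((hper t).comp (· ^ n))
    (fun θ => (Real.rpow_pos_of_pos (hpos t θ ht.le) n).le) fun θ => heq t θ ht
end

section
/- Let u : ℝ → ℝ be a smooth, strictly positive, 2π-periodic function. Then ∫_{-π}^{π} u(θ)^{-1/2} u'(θ) u'''(θ) dθ = − ∫_{-π}^{π} u(θ)^{-1/2} ( u''(θ) − (1/2) u(θ)^{-1} u'(θ)² )² dθ = −4 ∫_{-π}^{π} u(θ)^{1/2} ( (√u)''(θ) )² dθ, where (√u)'' denotes the second derivative of the function θ ↦ √(u(θ)). -/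
open MeasureTheory Real Set Filter

/-!
For every real `k` the function `u ^ p * (u' * u'' + k * u⁻¹ * u' ^ 3)` is periodic, so its
derivative has integral zero over a period. This expresses `∫ u ^ p * u' * u'''` through an integral
of `u ^ p` times a quadratic form in `u''` and `u⁻¹ * u' ^ 2`. Choosing `k = -(p + 2 * c) / 3` turns
the form into the square of `u'' - c * u⁻¹ * u' ^ 2` exactly when
`3 * c ^ 2 + 2 * (p - 1) * c + p * (p - 1) = 0`; for `p = -1/2` this equation has the double root
`c = 1/2`. The base of the square is, up to the factor `(1 - c) * u ^ (-c)`, the second derivative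
of `u ^ (1 - c)`.
-/

theorem periodic_deriv_s13 {𝕜 F : Type*} [NontriviallyNormedField 𝕜] [NormedAddCommGroup F]
    [NormedSpace 𝕜 F] {f : 𝕜 → F} {T : 𝕜} (hf : Function.Periodic f T) :
    Function.Periodic (deriv f) T := fun x => by
  rw [← deriv_comp_add_const, funext hf]

theorem integral_eq_zero_of_hasDerivAt_of_periodic {E : Type*} [NormedAddCommGroup E]
    [NormedSpace ℝ E] [CompleteSpace E] {f f' : ℝ → E} {a b : ℝ}
    (hderiv : ∀ x ∈ uIcc a b, HasDerivAt f (f' x) x) (hint : IntervalIntegrable f' volume a b)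
    (hper : Function.Periodic f (b - a)) : ∫ x in a..b, f' x = 0 := by
  have hends : f b = f a := by simpa using hper a
  rw [intervalIntegral.integral_eq_sub_of_hasDerivAt hderiv hint, hends, sub_self]

theorem hasDerivAt_rpow_mul_add_inv_mul_pow_three {u v w : ℝ → ℝ} {x z : ℝ} (p k : ℝ)
    (hu : HasDerivAt u (v x) x) (hv : HasDerivAt v (w x) x) (hw : HasDerivAt w z x)
    (hx : u x ≠ 0) :
    HasDerivAt (fun y => u y ^ p * (v y * w y + k * (u y)⁻¹ * v y ^ 3))
      (u x ^ p * v x * z +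
        u x ^ p * (w x ^ 2 + (p + 3 * k) * ((u x)⁻¹ * v x ^ 2) * w x +
          k * (p - 1) * ((u x)⁻¹ * v x ^ 2) ^ 2)) x := by
  refine ((hu.rpow_const (p := p) (Or.inl hx)).mul
    ((hv.mul hw).add (((hu.inv hx).const_mul k).mul (hv.pow 3)))).congr_deriv ?_
  rw [rpow_sub_one hx]
  simp only [Pi.mul_apply, Pi.add_apply, Pi.pow_apply, Pi.inv_apply]
  field_simp
  ring

theorem integral_rpow_mul_deriv_mul_deriv_deriv_deriv {u : ℝ → ℝ} {a b : ℝ} (p k : ℝ)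
    (hsmooth : ContDiff ℝ 3 u) (hne : ∀ x, u x ≠ 0) (hper : Function.Periodic u (b - a)) :
    ∫ x in a..b, u x ^ p * deriv u x * deriv (deriv (deriv u)) x =
      -∫ x in a..b, u x ^ p *
        (deriv (deriv u) x ^ 2 + (p + 3 * k) * ((u x)⁻¹ * deriv u x ^ 2) * deriv (deriv u) x +
          k * (p - 1) * ((u x)⁻¹ * deriv u x ^ 2) ^ 2) := by
  have hsmooth₁ : ContDiff ℝ 2 (deriv u) := hsmooth.deriv'
  have hsmooth₂ : ContDiff ℝ 1 (deriv (deriv u)) := hsmooth₁.deriv'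
  have hcont := hsmooth.continuous
  have hcont₁ := hsmooth₁.continuous
  have hcont₂ := hsmooth₂.continuous
  have hrpow : Continuous fun x => u x ^ p := hcont.rpow_const fun x => Or.inl (hne x)
  have hleft : Continuous fun x => u x ^ p * deriv u x * deriv (deriv (deriv u)) x :=
    (hrpow.mul hcont₁).mul hsmooth₂.continuous_deriv_one
  have hright : Continuous fun x => u x ^ p *
      (deriv (deriv u) x ^ 2 + (p + 3 * k) * ((u x)⁻¹ * deriv u x ^ 2) * deriv (deriv u) x +
        k * (p - 1) * ((u x)⁻¹ * deriv u x ^ 2) ^ 2) := by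
    fun_prop (disch := exact hne)
  have hperiodic : Function.Periodic
      (fun x => u x ^ p * (deriv u x * deriv (deriv u) x + k * (u x)⁻¹ * deriv u x ^ 3))
      (b - a) := fun x => by
    simp only [hper x, periodic_deriv_s13 hper x, periodic_deriv_s13 (periodic_deriv_s13 hper) x]
  have hderiv := fun x (_ : x ∈ uIcc a b) => hasDerivAt_rpow_mul_add_inv_mul_pow_three p k
    (hsmooth.differentiable (by norm_num) x).hasDerivAt
    (hsmooth₁.differentiable (by norm_num) x).hasDerivAt
    (hsmooth₂.differentiable (by norm_num) x).hasDerivAt (hne x)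
  rw [eq_neg_iff_add_eq_zero, ← intervalIntegral.integral_add (hleft.intervalIntegrable a b)
    (hright.intervalIntegrable a b)]
  exact integral_eq_zero_of_hasDerivAt_of_periodic hderiv
    ((hleft.add hright).intervalIntegrable a b) hperiodic

theorem integral_rpow_mul_deriv_mul_deriv_deriv_deriv_eq_neg_integral_sq {u : ℝ → ℝ} {a b p c : ℝ}
    (hsmooth : ContDiff ℝ 3 u) (hne : ∀ x, u x ≠ 0) (hper : Function.Periodic u (b - a))
    (hc : 3 * c ^ 2 + 2 * (p - 1) * c + p * (p - 1) = 0) :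
    ∫ x in a..b, u x ^ p * deriv u x * deriv (deriv (deriv u)) x =
      -∫ x in a..b, u x ^ p * (deriv (deriv u) x - c * (u x)⁻¹ * deriv u x ^ 2) ^ 2 := by
  rw [integral_rpow_mul_deriv_mul_deriv_deriv_deriv p (-(p + 2 * c) / 3) hsmooth hne hper]
  congr 2 with x
  linear_combination -(u x ^ p * ((u x)⁻¹ * deriv u x ^ 2) ^ 2 / 3) * hc

theorem deriv_deriv_rpow {u : ℝ → ℝ} {x : ℝ} (q : ℝ) (hu : ∀ᶠ y in nhds x, DifferentiableAt ℝ u y)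
    (hu' : DifferentiableAt ℝ (deriv u) x) (hx : u x ≠ 0) :
    deriv (deriv fun y => u y ^ q) x =
      q * u x ^ (q - 1) * (deriv (deriv u) x - (1 - q) * (u x)⁻¹ * deriv u x ^ 2) := by
  have hux : DifferentiableAt ℝ u x := hu.self_of_nhds
  have hderiv : deriv (fun y => u y ^ q) =ᶠ[nhds x] fun y => deriv u y * q * u y ^ (q - 1) := by
    filter_upwards [hu, hux.continuousAt.eventually_ne hx] with y hy hy0
    exact deriv_rpow_const hy (Or.inl hy0)
  rw [hderiv.deriv_eq]
  refine (((hu'.hasDerivAt.mul_const q).mul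
    (hux.hasDerivAt.rpow_const (Or.inl hx))).congr_deriv ?_).deriv
  rw [rpow_sub_one hx (q - 1)]
  field_simp
  ring

theorem rpow_mul_deriv_deriv_rpow_sq {u : ℝ → ℝ} {x : ℝ} (p c : ℝ)
    (hu : ∀ᶠ y in nhds x, DifferentiableAt ℝ u y) (hu' : DifferentiableAt ℝ (deriv u) x)
    (hx : 0 < u x) :
    u x ^ (p + 2 * c) * deriv (deriv fun y => u y ^ (1 - c)) x ^ 2 =
      (1 - c) ^ 2 *
        (u x ^ p * (deriv (deriv u) x - c * (u x)⁻¹ * deriv u x ^ 2) ^ 2) := by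
  have hexp : u x ^ (p + 2 * c) * (u x ^ (-c)) ^ 2 = u x ^ p := by
    rw [← rpow_mul_natCast hx.le, ← rpow_add hx]
    congr 1
    push_cast
    ring
  rw [deriv_deriv_rpow _ hu hu' hx.ne', sub_sub_cancel, sub_sub_cancel_left, ← hexp]
  ring

theorem entropy_integration_by_parts_general {u : ℝ → ℝ} {a b p c : ℝ}
    (hsmooth : ContDiff ℝ 3 u) (hpos : ∀ x, 0 < u x) (hper : Function.Periodic u (b - a))
    (hc : 3 * c ^ 2 + 2 * (p - 1) * c + p * (p - 1) = 0) :
    (∫ x in a..b, u x ^ p * deriv u x * deriv (deriv (deriv u)) x) =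
      -∫ x in a..b, u x ^ p * (deriv (deriv u) x - c * (u x)⁻¹ * deriv u x ^ 2) ^ 2 ∧
    (∫ x in a..b, u x ^ p * deriv u x * deriv (deriv (deriv u)) x) =
      -((1 - c) ^ 2)⁻¹ *
        ∫ x in a..b, u x ^ (p + 2 * c) * deriv (deriv fun y => u y ^ (1 - c)) x ^ 2 := by
  have hdiff : Differentiable ℝ u := hsmooth.differentiable (by norm_num)
  have hdiff₁ : Differentiable ℝ (deriv u) :=
    (hsmooth.deriv' (n := 2)).differentiable (by norm_num)
  have hc_sq_ne : (1 - c) ^ 2 ≠ 0 := by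
    refine pow_ne_zero 2 (sub_ne_zero.2 ?_)
    rintro rfl
    nlinarith [sq_nonneg (p + 1 / 2)]
  have hsq := integral_rpow_mul_deriv_mul_deriv_deriv_deriv_eq_neg_integral_sq hsmooth
    (fun x => (hpos x).ne') hper hc
  refine ⟨hsq, hsq.trans ?_⟩
  simp only [rpow_mul_deriv_deriv_rpow_sq p c (Eventually.of_forall hdiff) (hdiff₁ _) (hpos _),
    intervalIntegral.integral_const_mul]
  rw [neg_mul, inv_mul_cancel_left₀ hc_sq_ne]

/-- Integration-by-parts identity: for a smooth, strictly positive,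
`2π`-periodic `u`,
`∫ u^{−1/2} u' u''' = −∫ u^{−1/2} (u'' − (1/2)u^{−1}u'²)² = −4∫ u^{1/2} ((√u)'')²`. -/
theorem entropy_integration_by_parts (u : ℝ → ℝ)
    (hsmooth : ContDiff ℝ (⊤ : ℕ∞) u) (hpos : ∀ θ : ℝ, 0 < u θ)
    (hper : Function.Periodic u (2*π)) :
    (∫ θ in (-π)..π,
        u θ ^ (-(1:ℝ)/2) * deriv u θ * deriv (deriv (deriv u)) θ) =
      -∫ θ in (-π)..π,
        u θ ^ (-(1:ℝ)/2) *
          (deriv (deriv u) θ - (1/2) * (u θ)⁻¹ * (deriv u θ)^2)^2 ∧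
    (∫ θ in (-π)..π,
        u θ ^ (-(1:ℝ)/2) * deriv u θ * deriv (deriv (deriv u)) θ) =
      -4 * ∫ θ in (-π)..π,
        u θ ^ ((1:ℝ)/2) * (deriv (deriv (fun x => u x ^ ((1:ℝ)/2))) θ)^2 := by
  have hgen := entropy_integration_by_parts_general (a := -π) (b := π) (p := -(1 : ℝ) / 2)
    (c := 1 / 2) (contDiff_infty.1 hsmooth 3) hpos (by convert hper using 1; ring)
    (by norm_num)
  convert hgen using 6 <;> norm_num
end

section
/- Let β > 0, let S₀, K₀ > 0, and let u* : ℝ → [0,∞) be a 2π-periodic function that vanishes identically on an interval I ⊆ (−π, π) of length L > 0. Let u : [0,∞) × ℝ → [0,∞) be measurable and 2π-periodic in the second variable, and suppose the entropy bound ∫_{-π}^{π} u(t,θ)^{-β} dθ ≤ S₀ + K₀ t holds for all t ≥ 0. Then for all t ≥ 0, ( ∫_{-π}^{π} (u(t,θ) − u*(θ))² dθ )^{1/2} ≥ ( L^{1 + β/2} / (S₀ + K₀ t) )^{1/β}. In particular, u(t,·) cannot converge to u* in L²(−π,π) faster than the power law t^{−1/β}. -/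
open MeasureTheory Real Set Filter

/-!
On the dry region `u - u*` is just `u`, so it suffices to bound `‖u‖_p` below there. Since
`1 = |u|⁻¹ |u|`, Hölder's inequality with exponents `1/r = 1/β + 1/p` gives
`|I|^(1/r) = ‖1‖_r ≤ ‖u⁻¹‖_β ‖u‖_p`, and `‖u⁻¹‖_β` is the `1/β` power of the entropy. The
exponent `r` may be less than one, so a single application covers every `β > 0`.
-/

open scoped ENNReal

section PowerEntropy

variable {X F : Type*} [MeasurableSpace X] [NormedAddCommGroup F] {μ : Measure X} {β : ℝ}
  {f : X → F} {p q r : ℝ≥0∞}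

/-- The entropy `∫ ‖f‖ ^ (-β) dμ` of a function `f` with values in a normed group. It is taken in
`ℝ≥0∞`, where `0⁻¹ = ∞`, so that for `β > 0` the zeros of `f` contribute `+∞`. -/
noncomputable def powerEntropy (β : ℝ) (f : X → F) (μ : Measure X) : ℝ≥0∞ :=
  ∫⁻ x, ‖f x‖ₑ⁻¹ ^ β ∂μ

theorem powerEntropy_mono_measure {ν : Measure X} (h : μ ≤ ν) :
    powerEntropy β f μ ≤ powerEntropy β f ν :=
  lintegral_mono' h le_rfl

theorem ae_ne_zero_of_powerEntropy_ne_top (hβ : 0 < β) (hf : AEStronglyMeasurable f μ)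
    (hfin : powerEntropy β f μ ≠ ∞) : ∀ᵐ x ∂μ, f x ≠ 0 := by
  filter_upwards [ae_lt_top' (hf.enorm.inv.pow_const β) hfin] with x hx hx0
  simp [hx0, ENNReal.top_rpow_of_pos hβ] at hx

/-- The inverse on the left is the real one, with `0⁻¹ = 0`, but `powerEntropy` uses `0⁻¹ = ∞`. -/
theorem eLpNorm_inv_norm_eq_powerEntropy_rpow (hβ : 0 < β) (hne : ∀ᵐ x ∂μ, f x ≠ 0) :
    eLpNorm (fun x => ‖f x‖⁻¹) (ENNReal.ofReal β) μ = powerEntropy β f μ ^ (1 / β) := by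
  rw [eLpNorm_eq_lintegral_rpow_enorm_toReal (by simpa using hβ) ENNReal.ofReal_ne_top,
    ENNReal.toReal_ofReal hβ.le, powerEntropy]
  congr 1
  refine lintegral_congr_ae ?_
  filter_upwards [hne] with x hx
  rw [enorm_inv (norm_ne_zero_iff.mpr hx), enorm_norm]

theorem eLpNorm_one_le_eLpNorm_inv_norm_mul_eLpNorm [ENNReal.HolderTriple p q r]
    (hf : AEStronglyMeasurable f μ) (hne : ∀ᵐ x ∂μ, f x ≠ 0) :
    eLpNorm (fun _ => (1 : ℝ)) r μ ≤ eLpNorm (fun x => ‖f x‖⁻¹) p μ * eLpNorm f q μ := by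
  have hone : (fun _ => (1 : ℝ)) =ᵐ[μ] (fun x => ‖f x‖⁻¹) • fun x => ‖f x‖ := by
    filter_upwards [hne] with x hx
    exact (inv_mul_cancel₀ (norm_ne_zero_iff.mpr hx)).symm
  rw [eLpNorm_congr_ae hone, ← eLpNorm_norm f]
  exact eLpNorm_smul_le_mul_eLpNorm hf.norm hf.norm.aemeasurable.inv.aestronglyMeasurable

theorem eLpNorm_one_inv_ofReal_add_inv (hβ : 0 < β) (hp : p ≠ 0) :
    eLpNorm (fun _ : X => (1 : ℝ)) ((ENNReal.ofReal β)⁻¹ + p⁻¹)⁻¹ μ =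
      (μ univ ^ (1 + β * p⁻¹.toReal)) ^ (1 / β) := by
  have hβ' : ENNReal.ofReal β ≠ 0 := by simpa using hβ
  have hp' : p⁻¹ ≠ ∞ := ENNReal.inv_ne_top.mpr hp
  have hexp : 1 / ((ENNReal.ofReal β)⁻¹ + p⁻¹)⁻¹.toReal = (1 + β * p⁻¹.toReal) * (1 / β) := by
    rw [ENNReal.toReal_inv, ENNReal.toReal_add (ENNReal.inv_ne_top.mpr hβ') hp',
      ENNReal.toReal_inv, ENNReal.toReal_ofReal hβ.le]
    field_simp
  rw [eLpNorm_const' _ (by simp [hβ', hp]) (by simp), enorm_one, one_mul, hexp, ENNReal.rpow_mul]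

theorem measure_univ_rpow_div_powerEntropy_rpow_le_eLpNorm (hβ : 0 < β) (hp : p ≠ 0)
    (hf : AEStronglyMeasurable f μ) :
    (μ univ ^ (1 + β * p⁻¹.toReal) / powerEntropy β f μ) ^ (1 / β) ≤ eLpNorm f p μ := by
  have hβ_inv : 0 < 1 / β := by positivity
  by_cases hfin : powerEntropy β f μ = ∞
  · simp [hfin, hβ]
  have hne := ae_ne_zero_of_powerEntropy_ne_top hβ hf hfin
  have := ENNReal.HolderTriple.of (ENNReal.ofReal β) p
  rw [ENNReal.div_rpow_of_nonneg _ _ hβ_inv.le]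
  refine ENNReal.div_le_of_le_mul' ?_
  rw [← eLpNorm_one_inv_ofReal_add_inv hβ hp, ← eLpNorm_inv_norm_eq_powerEntropy_rpow hβ hne]
  exact eLpNorm_one_le_eLpNorm_inv_norm_mul_eLpNorm hf hne

theorem dry_region_power_law_general (hβ : 0 < β) (hp : p ≠ 0) {A : Set X} {g : X → F} {E : ℝ≥0∞}
    (hf : AEStronglyMeasurable f (μ.restrict A)) (hg : ∀ᵐ x ∂μ.restrict A, g x = 0)
    (hE : powerEntropy β f μ ≤ E) :
    (μ A ^ (1 + β * p⁻¹.toReal) / E) ^ (1 / β) ≤ eLpNorm (fun x => f x - g x) p μ := by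
  have hfg : (fun x => f x - g x) =ᵐ[μ.restrict A] f := by
    filter_upwards [hg] with x hx
    rw [hx, sub_zero]
  calc (μ A ^ (1 + β * p⁻¹.toReal) / E) ^ (1 / β)
      ≤ ((μ.restrict A) univ ^ (1 + β * p⁻¹.toReal) /
          powerEntropy β f (μ.restrict A)) ^ (1 / β) := by
        rw [Measure.restrict_apply_univ]
        gcongr
        exact (powerEntropy_mono_measure Measure.restrict_le_self).trans hE
    _ ≤ eLpNorm f p (μ.restrict A) := measure_univ_rpow_div_powerEntropy_rpow_le_eLpNorm hβ hp hf
    _ = eLpNorm (fun x => f x - g x) p (μ.restrict A) := (eLpNorm_congr_ae hfg).symm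
    _ ≤ eLpNorm (fun x => f x - g x) p μ := eLpNorm_mono_measure _ Measure.restrict_le_self

end PowerEntropy

theorem ennreal_ofReal_rpow_div_rpow {x y s t : ℝ} (hx : 0 ≤ x) (hy : 0 < y) (hs : 0 ≤ s)
    (ht : 0 ≤ t) :
    ENNReal.ofReal ((x ^ s / y) ^ t) = (ENNReal.ofReal x ^ s / ENNReal.ofReal y) ^ t := by
  rw [← ENNReal.ofReal_rpow_of_nonneg (by positivity) ht, ENNReal.ofReal_div_of_pos hy,
    ENNReal.ofReal_rpow_of_nonneg hx hs]

/-- Power-law lower bound on the distance from a steady state with a dry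
region: if `u*` vanishes on an interval of length `L > 0` inside `(−π,π)` and the entropy
of `u(t,·)` (with the convention that `v^{−β} = +∞` where `v = 0`) grows at most linearly,
then `‖u(t,·) − u*‖_{L²(−π,π)} ≥ (L^{1+β/2}/(S₀ + K₀t))^{1/β}`. -/
theorem dry_region_power_law (β S₀ K₀ L a b : ℝ)
    (hβ : 0 < β) (hS₀ : 0 < S₀) (hK₀ : 0 < K₀) (hL : 0 < L)
    (hab : Ioo a b ⊆ Ioo (-π) π) (hlen : b - a = L)
    (ustar : ℝ → ℝ) (hper : Function.Periodic ustar (2*π))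
    (hnonnegstar : ∀ θ : ℝ, 0 ≤ ustar θ)
    (hvanish : ∀ θ ∈ Ioo a b, ustar θ = 0)
    (u : ℝ → ℝ → ℝ) (hmeas : Measurable (fun p : ℝ × ℝ => u p.1 p.2))
    (hnonneg : ∀ t θ : ℝ, 0 ≤ u t θ)
    (huper : ∀ t : ℝ, Function.Periodic (u t) (2*π))
    (hentropy : ∀ t : ℝ, 0 ≤ t →
      (∫⁻ θ in Ioo (-π) π, (ENNReal.ofReal (u t θ))⁻¹ ^ β) ≤
        ENNReal.ofReal (S₀ + K₀ * t)) :
    ∀ t : ℝ, 0 ≤ t →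
      ENNReal.ofReal ((L ^ (1 + β/2) / (S₀ + K₀ * t)) ^ (1/β)) ≤
        eLpNorm (fun θ => u t θ - ustar θ) 2 (volume.restrict (Ioo (-π) π)) := by
  intro t ht
  have hentropy_t : powerEntropy β (u t) (volume.restrict (Ioo (-π) π)) ≤
      ENNReal.ofReal (S₀ + K₀ * t) := by
    simpa only [powerEntropy, Real.enorm_of_nonneg (hnonneg t _)] using hentropy t ht
  rw [ennreal_ofReal_rpow_div_rpow hL.le (by positivity) (by positivity) (by positivity)]
  simpa [Measure.restrict_eq_self _ hab, hlen, div_eq_mul_inv] using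
    dry_region_power_law_general hβ two_ne_zero
      (hmeas.comp measurable_prodMk_left).aestronglyMeasurable
      (ae_restrict_of_forall_mem measurableSet_Ioo hvanish) hentropy_t
end
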